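/- Let D be a division ring with center K. Then there is exactly one rank function S on the simple D-ring D tensor_K M_K, and the subring D tensor_K (lim_n M_{2^n}(K)), which is isomorphic to lim_n M_{2^n}(D), is dense in D tensor_K M_K with respect to the S-metric. -/

import Mathlib

open scoped TensorProduct Kronecker

noncomputable section

namespace AraClaramunt

/-! ### Pseudo-rank functions and rank metric notions -/

/-- A pseudo-rank function on a unital ring. -/
structure IsPseudoRankFunction {R : Type*} [Ring R] (N : R → ℝ) : Prop where
  nonneg : ∀ x : R, 0 ≤ N x
  le_one : ∀ x : R, N x ≤ 1
  map_one : N 1 = 1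
  subadditive : ∀ a b : R, N (a + b) ≤ N a + N b
  mul_le_left : ∀ a b : R, N (a * b) ≤ N a
  mul_le_right : ∀ a b : R, N (a * b) ≤ N b
  add_of_orthogonal : ∀ e f : R, IsIdempotentElem e → IsIdempotentElem f →
    e * f = 0 → f * e = 0 → N (e + f) = N e + N f

/-- A rank function is a faithful pseudo-rank function. -/
def IsRankFunction {R : Type*} [Ring R] (N : R → ℝ) : Prop :=
  IsPseudoRankFunction N ∧ ∀ x : R, N x = 0 → x = 0

/-- Cauchy sequence for the pseudo-metric `d(x,y) = N (x - y)`. -/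
def RankCauchy {R : Type*} [Ring R] (N : R → ℝ) (u : ℕ → R) : Prop :=
  ∀ ε : ℝ, 0 < ε → ∃ n₀ : ℕ, ∀ m n : ℕ, n₀ ≤ m → n₀ ≤ n → N (u m - u n) < ε

/-- Convergence for the pseudo-metric `d(x,y) = N (x - y)`. -/
def RankTendsto {R : Type*} [Ring R] (N : R → ℝ) (u : ℕ → R) (x : R) : Prop :=
  ∀ ε : ℝ, 0 < ε → ∃ n₀ : ℕ, ∀ n : ℕ, n₀ ≤ n → N (u n - x) < ε

/-- Completeness with respect to the pseudo-metric `d(x,y) = N (x - y)`. -/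
def RankComplete {R : Type*} [Ring R] (N : R → ℝ) : Prop :=
  ∀ u : ℕ → R, RankCauchy N u → ∃ x : R, RankTendsto N u x

/-- Density of a subset with respect to the pseudo-metric `d(x,y) = N (x - y)`. -/
def RankDense {R : Type*} [Ring R] (N : R → ℝ) (S : Set R) : Prop :=
  ∀ x : R, ∀ ε : ℝ, 0 < ε → ∃ y ∈ S, N (x - y) < ε

/-- von Neumann regularity. -/
def VNRegular (R : Type*) [Ring R] : Prop :=
  ∀ x : R, ∃ y : R, x = x * y * x

/-- A continuous factor: a simple, von Neumann regular, right and left self-injective ring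
admitting a rank function whose image is all of `[0,1]`. -/
def IsContinuousFactor (R : Type*) [Ring R] : Prop :=
  IsSimpleRing R ∧ VNRegular R ∧ Module.Injective R R ∧ Module.Injective Rᵐᵒᵖ Rᵐᵒᵖ ∧
    ∃ N : R → ℝ, IsRankFunction N ∧ Set.range N = Set.Icc (0 : ℝ) 1

/-- An extremal pseudo-rank function: an extreme point of the convex set of all
pseudo-rank functions. -/
def IsExtremalPseudoRankFunction {R : Type*} [Ring R] (N : R → ℝ) : Prop :=
  N ∈ Set.extremePoints ℝ {S : R → ℝ | IsPseudoRankFunction S}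

/-! ### Matricial and ultramatricial algebras -/

/-- A matricial `K`-algebra. -/
def IsMatricialAlgebra (K : Type*) [Field K] (A : Type*) [Ring A] [Algebra K A] : Prop :=
  ∃ (k : ℕ) (n : Fin (k + 1) → ℕ), (∀ i, 0 < n i) ∧
    Nonempty (A ≃ₐ[K] ((i : Fin (k + 1)) → Matrix (Fin (n i)) (Fin (n i)) K))

/-- An ultramatricial `K`-algebra: the increasing union of matricial subalgebras. -/
def IsUltramatricialAlgebra (K : Type*) [Field K] (B : Type*) [Ring B] [Algebra K B] : Prop :=
  ∃ C : ℕ → Subalgebra K B, (∀ n, C n ≤ C (n + 1)) ∧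
    (∀ n, IsMatricialAlgebra K (C n)) ∧ (∀ b : B, ∃ n, b ∈ C n)

/-- `Q`, with rank function `N`, is the rank-metric completion of a direct limit of the matrix
algebras `M_{p n}(K)`: it is complete and carries a dense increasing tower of unital subalgebras
isomorphic to `M_{p n}(K)`. -/
def IsMatrixTowerCompletion (K : Type*) [Field K] (Q : Type*) [Ring Q] [Algebra K Q]
    (N : Q → ℝ) (p : ℕ → ℕ) : Prop :=
  IsRankFunction N ∧ RankComplete N ∧
    ∃ A : ℕ → Subalgebra K Q, (∀ n, A n ≤ A (n + 1)) ∧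
      (∀ n, Nonempty ((A n) ≃ₐ[K] Matrix (Fin (p n)) (Fin (p n)) K)) ∧
      RankDense N (⋃ n, (A n : Set Q))

/-- `Q` is (a copy of) von Neumann's continuous factor `M_K`, the completion of
`lim_n M_{2^n}(K)` with respect to its unique rank function. -/
def IsMK (K : Type*) [Field K] (Q : Type*) [Ring Q] [Algebra K Q] (N : Q → ℝ) : Prop :=
  IsMatrixTowerCompletion K Q N (fun n => 2 ^ n)

/-- The canonical block-diagonal unital embedding `M_a(K) → M_b(K)`, `z ↦ z ⊗ 1_g`,
where `b = a * g`. -/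
def blockEmbedFun (K : Type*) [Semiring K] {a : ℕ} (g b : ℕ) (h : a * g = b)
    (z : Matrix (Fin a) (Fin a) K) : Matrix (Fin b) (Fin b) K :=
  Matrix.reindex (finProdFinEquiv.trans (finCongr h)) (finProdFinEquiv.trans (finCongr h))
    (z ⊗ₖ (1 : Matrix (Fin g) (Fin g) K))

end AraClaramunt
namespace AraClaramunt

/-!
Let `M` be complete for the rank metric with a dense tower of matrix algebras. An element of `M`
of rank less than that of an idempotent `e` is carried by a unit into the corner of `e`; as the
tower has idempotents of arbitrarily small rank, this forces `M` to be simple and its pseudo-rank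
function to be unique, hence `D ⊗ M` to be simple.

A rank function on `D ⊗ M` arises by approximating elements of `M` by matrices over `K`, extending
scalars to `D` and taking an ultralimit of normalized ranks. Frobenius' inequality
`rank ab + rank bc ≤ rank abc + rank b` passes to the quotient by elements of rank zero, where
idempotents need not lift, and it implies additivity on orthogonal idempotents.

Any pseudo-rank function `S` on `D ⊗ M` restricts to the rank of `M`, so `D ⊗ ⋃ₙ Aₙ` is dense; and
each `D ⊗ Aₙ` is a matrix algebra over `D`, on which `S` has to be the normalized rank.
-/

section SimpleRing

variable {R : Type*} [Ring R]

lemma isSimpleRing_of_forall_one_mem [Nontrivial R]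
    (h : ∀ (J : TwoSidedIdeal R) (x : R), x ≠ 0 → x ∈ J → 1 ∈ J) : IsSimpleRing R := by
  refine .of_eq_bot_or_eq_top fun J => or_iff_not_imp_left.2 fun hJ => ?_
  obtain ⟨x, hxJ, hx⟩ := SetLike.exists_of_lt (bot_lt_iff_ne_bot.2 hJ)
  exact J.one_mem_iff.1 (h J x hx hxJ)

lemma one_mem_of_map_mem {T : Type*} [Ring T] [IsSimpleRing T] (f : T →+* R)
    {J : TwoSidedIdeal R} {a : T} (ha : a ≠ 0) (haJ : f a ∈ J) : 1 ∈ J := by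
  have h : (1 : T) ∈ J.comap f :=
    IsSimpleRing.one_mem_of_ne_zero_mem (J.comap f) ha ((TwoSidedIdeal.mem_comap f).2 haJ)
  simpa using (TwoSidedIdeal.mem_comap f).1 h

end SimpleRing

namespace IsPseudoRankFunction

variable {R : Type*} [Ring R] {N N' : R → ℝ}

lemma map_zero (hN : IsPseudoRankFunction N) : N 0 = 0 := by
  have h := hN.add_of_orthogonal 0 0 .zero .zero (mul_zero 0) (mul_zero 0)
  rw [add_zero] at h
  linarith

lemma nontrivial (hN : IsPseudoRankFunction N) : Nontrivial R :=
  ⟨1, 0, fun h => one_ne_zero (hN.map_one.symm.trans ((congrArg N h).trans hN.map_zero))⟩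

lemma map_neg (hN : IsPseudoRankFunction N) (x : R) : N (-x) = N x :=
  le_antisymm (by simpa using hN.mul_le_right (-1) x) (by simpa using hN.mul_le_right (-1) (-x))

lemma map_sub_comm (hN : IsPseudoRankFunction N) (x y : R) : N (x - y) = N (y - x) := by
  rw [← hN.map_neg, neg_sub]

lemma map_sub_le_add (hN : IsPseudoRankFunction N) (x y z : R) :
    N (x - z) ≤ N (x - y) + N (y - z) := by
  simpa only [sub_add_sub_cancel] using hN.subadditive (x - y) (y - z)

lemma le_add_map_sub (hN : IsPseudoRankFunction N) (x y : R) : N x ≤ N y + N (x - y) := by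
  simpa only [add_sub_cancel] using hN.subadditive y (x - y)

lemma abs_sub_le_map_sub (hN : IsPseudoRankFunction N) (x y : R) : |N x - N y| ≤ N (x - y) := by
  have hxy := hN.le_add_map_sub x y
  have hyx := hN.le_add_map_sub y x
  rw [hN.map_sub_comm y x] at hyx
  exact abs_sub_le_iff.2 ⟨by linarith, by linarith⟩

lemma comp {T : Type*} [Ring T] (hN : IsPseudoRankFunction N) (f : T →+* R) :
    IsPseudoRankFunction (N ∘ f) where
  nonneg _ := hN.nonneg _
  le_one _ := hN.le_one _
  map_one := by simp [hN.map_one]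
  subadditive a b := by simpa using hN.subadditive (f a) (f b)
  mul_le_left a b := by simpa using hN.mul_le_left (f a) (f b)
  mul_le_right a b := by simpa using hN.mul_le_right (f a) (f b)
  add_of_orthogonal e g he hg heg hge := by
    simpa using hN.add_of_orthogonal _ _ (he.map f) (hg.map f)
      (by rw [← map_mul, heg, _root_.map_zero]) (by rw [← map_mul, hge, _root_.map_zero])

lemma eq_of_forall_exists_approx (hN : IsPseudoRankFunction N) (hN' : IsPseudoRankFunction N')
    (happrox : ∀ x, ∀ ε > 0, ∃ b, N' b = N b ∧ N (x - b) ≤ ε ∧ N' (x - b) ≤ ε) : N' = N := by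
  funext x
  refine eq_of_abs_sub_le_all fun ε hε => ?_
  obtain ⟨b, hb, hxb, hxb'⟩ := happrox x (ε / 2) (half_pos hε)
  calc |N' x - N x| ≤ |N' x - N' b| + |N b - N x| := by rw [← hb]; exact abs_sub_le _ _ _
    _ ≤ N' (x - b) + N (x - b) := by
        rw [hN.map_sub_comm x b]
        exact add_le_add (hN'.abs_sub_le_map_sub x b) (hN.abs_sub_le_map_sub b x)
    _ ≤ ε := by linarith

lemma isRankFunction [IsSimpleRing R] (hN : IsPseudoRankFunction N) : IsRankFunction N := by
  refine ⟨hN, fun x hx => ?_⟩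
  let kernel : TwoSidedIdeal R := .mk' {x | N x = 0} hN.map_zero
    (fun {x y} hx hy => le_antisymm
      ((hN.subadditive x y).trans_eq (by rw [hx, hy, add_zero])) (hN.nonneg _))
    (fun {x} hx => (hN.map_neg x).trans hx)
    (fun {x y} hy => le_antisymm ((hN.mul_le_right x y).trans_eq hy) (hN.nonneg _))
    (fun {x y} hx => le_antisymm ((hN.mul_le_left x y).trans_eq hx) (hN.nonneg _))
  have mem_kernel (y : R) : y ∈ kernel ↔ N y = 0 := TwoSidedIdeal.mem_mk' ..
  by_contra hx0
  have h_one : N 1 = 0 :=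
    (mem_kernel 1).1 (IsSimpleRing.one_mem_of_ne_zero_mem kernel hx0 ((mem_kernel x).2 hx))
  exact one_ne_zero (hN.map_one.symm.trans h_one)

end IsPseudoRankFunction

/-! ### Ranks satisfying Frobenius' inequality -/

/-- A normalized subadditive rank satisfying Frobenius' inequality. Every condition is a weak
inequality between values of `N`, so, unlike the additivity on orthogonal idempotents of
`IsPseudoRankFunction`, the notion passes to quotients; it implies `IsPseudoRankFunction`. -/
structure IsFrobeniusRank {R : Type*} [Ring R] (N : R → ℝ) : Prop where
  nonneg : ∀ x : R, 0 ≤ N x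
  map_zero : N 0 = 0
  map_one : N 1 = 1
  subadditive : ∀ a b : R, N (a + b) ≤ N a + N b
  mul_le_left : ∀ a b : R, N (a * b) ≤ N a
  mul_le_right : ∀ a b : R, N (a * b) ≤ N b
  frobenius : ∀ a b c : R, N (a * b) + N (b * c) ≤ N b + N (a * b * c)

namespace IsFrobeniusRank

variable {R T : Type*} [Ring R] [Ring T] {N : R → ℝ}

lemma le_one (hN : IsFrobeniusRank N) (x : R) : N x ≤ 1 := by
  simpa [hN.map_one] using hN.mul_le_left 1 x

lemma isPseudoRankFunction (hN : IsFrobeniusRank N) : IsPseudoRankFunction N where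
  nonneg := hN.nonneg
  le_one := hN.le_one
  map_one := hN.map_one
  subadditive := hN.subadditive
  mul_le_left := hN.mul_le_left
  mul_le_right := hN.mul_le_right
  add_of_orthogonal e f he hf hef _ := by
    refine le_antisymm (hN.subadditive e f) ?_
    have h := hN.frobenius e (e + f) f
    rwa [show e * (e + f) = e by rw [mul_add, he.eq, hef, add_zero],
      show (e + f) * f = f by rw [add_mul, hf.eq, hef, zero_add], hef, hN.map_zero, add_zero] at h

lemma comp (hN : IsFrobeniusRank N) (f : T →+* R) : IsFrobeniusRank (N ∘ f) where
  nonneg _ := hN.nonneg _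
  map_zero := by simp [hN.map_zero]
  map_one := by simp [hN.map_one]
  subadditive a b := by simpa using hN.subadditive (f a) (f b)
  mul_le_left a b := by simpa using hN.mul_le_left (f a) (f b)
  mul_le_right a b := by simpa using hN.mul_le_right (f a) (f b)
  frobenius a b c := by simpa using hN.frobenius (f a) (f b) (f c)

lemma exists_isFrobeniusRank_of_surjective (hN : IsFrobeniusRank N) (f : R →+* T)
    (hf : Function.Surjective f) (hker : ∀ x, f x = 0 → N x = 0) :
    ∃ N' : T → ℝ, IsFrobeniusRank N' := by
  have le_of_eq_image {x y : R} (hxy : f x = f y) : N x ≤ N y := by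
    have h := hN.isPseudoRankFunction.le_add_map_sub x y
    rwa [hker (x - y) (by rw [map_sub, hxy, sub_self]), add_zero] at h
  let N' : T → ℝ := N ∘ Function.surjInv hf
  have N'_apply (x : R) : N' (f x) = N x :=
    have hx := Function.surjInv_eq hf (f x)
    le_antisymm (le_of_eq_image hx) (le_of_eq_image hx.symm)
  refine ⟨N', fun _ => hN.nonneg _, ?_, ?_, ?_, ?_, ?_, ?_⟩
  · rw [← _root_.map_zero f, N'_apply, hN.map_zero]
  · rw [← _root_.map_one f, N'_apply, hN.map_one]
  · simp only [hf.forall, ← map_add, N'_apply]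
    exact hN.subadditive
  · simp only [hf.forall, ← map_mul, N'_apply]
    exact hN.mul_le_left
  · simp only [hf.forall, ← map_mul, N'_apply]
    exact hN.mul_le_right
  · simp only [hf.forall, ← map_mul, N'_apply]
    exact hN.frobenius

end IsFrobeniusRank

section UltraLimit

open Filter Topology

variable {R : Type*}

/-- The pointwise limit of a sequence of real functions along a fixed nonprincipal ultrafilter
on `ℕ`. -/
def ultraLimit (N : ℕ → R → ℝ) (x : R) : ℝ :=
  limUnder (hyperfilter ℕ : Filter ℕ) fun k => N k x

lemma ultraLimit_eq_of_tendsto {N : ℕ → R → ℝ} {x : R} {r : ℝ}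
    (h : Tendsto (fun k => N k x) atTop (𝓝 r)) : ultraLimit N x = r :=
  (h.mono_left (Nat.cofinite_eq_atTop ▸ hyperfilter_le_cofinite)).limUnder_eq

lemma tendsto_ultraLimit {N : ℕ → R → ℝ} {x : R} (h : ∀ k, N k x ∈ Set.Icc (0 : ℝ) 1) :
    Tendsto (fun k => N k x) (hyperfilter ℕ) (𝓝 (ultraLimit N x)) := by
  obtain ⟨r, -, hr⟩ := isCompact_Icc.ultrafilter_le_nhds' ((hyperfilter ℕ).map fun k => N k x)
    (mem_map.2 (Eventually.of_forall h))
  exact tendsto_nhds_limUnder ⟨r, hr⟩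

lemma IsFrobeniusRank.ultraLimit [Ring R] {N : ℕ → R → ℝ} (hN : ∀ k, IsFrobeniusRank (N k)) :
    IsFrobeniusRank (ultraLimit N) := by
  have lim (x : R) : Tendsto (fun k => N k x) (hyperfilter ℕ) (𝓝 (AraClaramunt.ultraLimit N x)) :=
    tendsto_ultraLimit fun k => ⟨(hN k).nonneg x, (hN k).le_one x⟩
  refine ⟨fun x => ?_, ?_, ?_, fun a b => ?_, fun a b => ?_, fun a b => ?_, fun a b c => ?_⟩
  · exact ge_of_tendsto' (lim x) fun k => (hN k).nonneg x
  · exact ultraLimit_eq_of_tendsto (by simp [(hN _).map_zero])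
  · exact ultraLimit_eq_of_tendsto (by simp [(hN _).map_one])
  · exact le_of_tendsto_of_tendsto' (lim _) ((lim a).add (lim b)) fun k => (hN k).subadditive a b
  · exact le_of_tendsto_of_tendsto' (lim _) (lim a) fun k => (hN k).mul_le_left a b
  · exact le_of_tendsto_of_tendsto' (lim _) (lim b) fun k => (hN k).mul_le_right a b
  · exact le_of_tendsto_of_tendsto' ((lim _).add (lim _)) ((lim b).add (lim _))
      fun k => (hN k).frobenius a b c

end UltraLimit

/-! ### The rank of matrices over a division ring -/

section RowRank

open Module LinearMap

variable {F : Type*} [DivisionRing F] {V W : Type*} [AddCommGroup V] [Module F V]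
  [AddCommGroup W] [Module F W] {n : Type*} [Fintype n] [DecidableEq n]

/-- The dimension of the row space of a square matrix over a division ring (`Matrix.rank` requires
commutative coefficients). -/
def rowRank (x : Matrix n n F) : ℕ :=
  finrank F (range (Matrix.toLinearMapRight' x))

lemma rowRank_zero : rowRank (0 : Matrix n n F) = 0 := by
  rw [rowRank, map_zero, range_zero, finrank_bot]

lemma rowRank_one : rowRank (1 : Matrix n n F) = Fintype.card n := by
  rw [rowRank, Matrix.toLinearMapRight'_one, range_id, finrank_top, finrank_fintype_fun_eq_card]

lemma rowRank_mul_le_left (a b : Matrix n n F) : rowRank (a * b) ≤ rowRank a := by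
  rw [rowRank, Matrix.toLinearMapRight'_mul, range_comp]
  exact Submodule.finrank_map_le _ _

lemma rowRank_mul_le_right (a b : Matrix n n F) : rowRank (a * b) ≤ rowRank b := by
  rw [rowRank, Matrix.toLinearMapRight'_mul]
  exact Submodule.finrank_mono (range_comp_le_range _ _)

lemma rowRank_add_le (a b : Matrix n n F) : rowRank (a + b) ≤ rowRank a + rowRank b := by
  rw [rowRank, map_add]
  exact (Submodule.finrank_mono (range_add_le _ _)).trans
    (Submodule.finrank_add_le_finrank_add_finrank _ _)

lemma finrank_map_add_finrank_inf_ker [FiniteDimensional F V] (f : V →ₗ[F] W)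
    (P : Submodule F V) :
    finrank F (P.map f) + finrank F (P ⊓ ker f : Submodule F V) = finrank F P := by
  rw [← finrank_range_add_finrank_ker (f.domRestrict P), range_domRestrict,
    ← Submodule.map_comap_subtype, Submodule.finrank_map_subtype_eq]
  rfl

lemma rowRank_frobenius (a b c : Matrix n n F) :
    rowRank (a * b) + rowRank (b * c) ≤ rowRank b + rowRank (a * b * c) := by
  rw [rowRank, rowRank, rowRank, rowRank, Matrix.toLinearMapRight'_mul (a * b) c,
    Matrix.toLinearMapRight'_mul a b, Matrix.toLinearMapRight'_mul b c, range_comp, range_comp,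
    range_comp, range_comp]
  set A := Matrix.toLinearMapRight' a
  set B := Matrix.toLinearMapRight' b
  set C := Matrix.toLinearMapRight' c
  have hB := finrank_map_add_finrank_inf_ker C (range B)
  have hAB := finrank_map_add_finrank_inf_ker C ((range A).map B)
  have hker : finrank F ((range A).map B ⊓ ker C : Submodule F _) ≤
      finrank F (range B ⊓ ker C : Submodule F _) :=
    Submodule.finrank_mono (inf_le_inf_right _ map_le_range)
  omega

lemma exists_comp_comp_eq_of_finrank_range_le {V' W' : Type*} [AddCommGroup V'] [Module F V']
    [AddCommGroup W'] [Module F W'] [FiniteDimensional F W] [FiniteDimensional F W']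
    {f : V →ₗ[F] W} {g : V' →ₗ[F] W'} (h : finrank F (range f) ≤ finrank F (range g)) :
    ∃ (p : V →ₗ[F] V') (q : W' →ₗ[F] W), q ∘ₗ g ∘ₗ p = f := by
  obtain ⟨j, hj⟩ : ∃ j : range f →ₗ[F] range g, Function.Injective j :=
    _root_.finrank_le_iff_exists_linearMap.1 h
  obtain ⟨r, hr⟩ := j.exists_leftInverse_of_injective (ker_eq_bot.2 hj)
  obtain ⟨s, hs⟩ := g.rangeRestrict.exists_rightInverse_of_surjective (range_rangeRestrict g)
  obtain ⟨t, ht⟩ := (range g).subtype.exists_leftInverse_of_injective (Submodule.ker_subtype _)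
  refine ⟨s ∘ₗ j ∘ₗ f.rangeRestrict, (range f).subtype ∘ₗ r ∘ₗ t, LinearMap.ext fun v => ?_⟩
  have hgs (w) : g (s w) = w := congrArg Subtype.val (LinearMap.congr_fun hs w)
  have htg (w : range g) : t w = w := LinearMap.congr_fun ht w
  have hrj (w) : r (j w) = w := LinearMap.congr_fun hr w
  simp [hgs, htg, hrj]

lemma exists_mul_mul_eq_of_rowRank_le {x y : Matrix n n F} (h : rowRank x ≤ rowRank y) :
    ∃ p q, p * y * q = x := by
  obtain ⟨P, Q, hPQ⟩ := exists_comp_comp_eq_of_finrank_range_le h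
  obtain ⟨p, rfl⟩ := Matrix.toLinearMapRight'.surjective P
  obtain ⟨q, rfl⟩ := Matrix.toLinearMapRight'.surjective Q
  refine ⟨p, q, Matrix.toLinearMapRight'.injective ?_⟩
  rwa [Matrix.toLinearMapRight'_mul, Matrix.toLinearMapRight'_mul]

/-- The rank of a square matrix divided by its size. -/
def normRank (x : Matrix n n F) : ℝ :=
  rowRank x / Fintype.card n

lemma normRank_le_normRank_iff [Nonempty n] {x y : Matrix n n F} :
    normRank x ≤ normRank y ↔ rowRank x ≤ rowRank y := by
  rw [normRank, normRank, div_le_div_iff_of_pos_right (by positivity), Nat.cast_le]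

lemma isFrobeniusRank_normRank [Nonempty n] : IsFrobeniusRank (normRank (F := F) (n := n)) where
  nonneg x := by unfold normRank; positivity
  map_zero := by simp [normRank, rowRank_zero]
  map_one := by simp [normRank, rowRank_one]
  subadditive a b := by
    simp only [normRank, ← add_div]
    gcongr
    exact_mod_cast rowRank_add_le a b
  mul_le_left a b := normRank_le_normRank_iff.2 (rowRank_mul_le_left a b)
  mul_le_right a b := normRank_le_normRank_iff.2 (rowRank_mul_le_right a b)
  frobenius a b c := by
    simp only [normRank, ← add_div]
    exact div_le_div_of_nonneg_right (mod_cast rowRank_frobenius a b c) (Nat.cast_nonneg _)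

end RowRank

section DiagonalIdempotents

variable {F : Type*} [DivisionRing F] {n : Type*} [DecidableEq n]

/-- The diagonal matrix with entries `1` at the indices in `s` and `0` elsewhere: an idempotent of
rank `s.card`. -/
def diagIdem (F : Type*) [DivisionRing F] (s : Finset n) : Matrix n n F :=
  Matrix.diagonal fun i => if i ∈ s then 1 else 0

lemma diagIdem_empty : diagIdem F (∅ : Finset n) = 0 := by
  simp [diagIdem]

lemma diagIdem_union {s t : Finset n} (h : Disjoint s t) :
    diagIdem F (s ∪ t) = diagIdem F s + diagIdem F t := by
  rw [diagIdem, diagIdem, diagIdem, Matrix.diagonal_add]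
  congr 1
  funext i
  by_cases hs : i ∈ s
  · simp [hs, Finset.disjoint_left.1 h hs]
  · simp [hs]

variable [Fintype n]

lemma diagIdem_univ : diagIdem F (Finset.univ : Finset n) = 1 := by
  simp [diagIdem]

lemma diagIdem_mul_diagIdem (s t : Finset n) :
    diagIdem F s * diagIdem F t = diagIdem F (s ∩ t) := by
  simp only [diagIdem, Matrix.diagonal_mul_diagonal, Finset.mem_inter, ite_zero_mul_ite_zero,
    mul_one]

lemma isIdempotentElem_diagIdem (s : Finset n) : IsIdempotentElem (diagIdem F s) := by
  rw [IsIdempotentElem, diagIdem_mul_diagIdem, Finset.inter_self]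

lemma diagIdem_singleton_eq_mul (i j : n) :
    diagIdem F {i} = Matrix.single i j 1 * diagIdem F {j} * Matrix.single j i 1 := by
  have h (k : n) : diagIdem F {k} = Matrix.single k k 1 := by
    simp [diagIdem, ← Matrix.diagonal_single, Pi.single_apply]
  simp [h]

variable {N : Matrix n n F → ℝ}

lemma IsPseudoRankFunction.map_diagIdem_singleton_le (hN : IsPseudoRankFunction N) (i j : n) :
    N (diagIdem F {i}) ≤ N (diagIdem F {j}) := by
  rw [diagIdem_singleton_eq_mul i j]
  exact (hN.mul_le_left _ _).trans (hN.mul_le_right _ _)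

lemma IsPseudoRankFunction.map_diagIdem_eq_card_mul (hN : IsPseudoRankFunction N) (i : n)
    (s : Finset n) : N (diagIdem F s) = s.card * N (diagIdem F {i}) := by
  induction s using Finset.induction_on with
  | empty => simp [diagIdem_empty, hN.map_zero]
  | insert j s hj ih =>
    have hdisj : Disjoint {j} s := Finset.disjoint_singleton_left.2 hj
    have hmul : diagIdem F {j} * diagIdem F s = 0 := by
      rw [diagIdem_mul_diagIdem, Finset.disjoint_iff_inter_eq_empty.1 hdisj, diagIdem_empty]
    have hmul' : diagIdem F s * diagIdem F {j} = 0 := by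
      rw [diagIdem_mul_diagIdem, Finset.inter_comm, ← diagIdem_mul_diagIdem, hmul]
    rw [Finset.insert_eq, diagIdem_union hdisj, hN.add_of_orthogonal _ _
      (isIdempotentElem_diagIdem _) (isIdempotentElem_diagIdem _) hmul hmul', ih,
      Finset.card_union_of_disjoint hdisj, Finset.card_singleton,
      le_antisymm (hN.map_diagIdem_singleton_le j i) (hN.map_diagIdem_singleton_le i j)]
    push_cast
    ring

lemma IsPseudoRankFunction.le_of_rowRank_le (hN : IsPseudoRankFunction N) {x y : Matrix n n F}
    (h : rowRank x ≤ rowRank y) : N x ≤ N y := by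
  obtain ⟨p, q, rfl⟩ := exists_mul_mul_eq_of_rowRank_le h
  exact (hN.mul_le_left _ _).trans (hN.mul_le_right _ _)

variable [Nonempty n]

lemma IsPseudoRankFunction.map_diagIdem (hN : IsPseudoRankFunction N) (s : Finset n) :
    N (diagIdem F s) = s.card / Fintype.card n := by
  have i : n := Classical.arbitrary n
  have huniv := hN.map_diagIdem_eq_card_mul i Finset.univ
  rw [diagIdem_univ, hN.map_one, Finset.card_univ] at huniv
  rw [hN.map_diagIdem_eq_card_mul i s, eq_div_iff (by positivity), mul_assoc, mul_comm (N _),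
    ← huniv, mul_one]

lemma rowRank_diagIdem (s : Finset n) : rowRank (diagIdem F s) = s.card := by
  have h := isFrobeniusRank_normRank.isPseudoRankFunction.map_diagIdem (F := F) s
  rw [normRank, div_left_inj' (by positivity)] at h
  exact_mod_cast h

lemma exists_rowRank_diagIdem_eq (x : Matrix n n F) :
    ∃ s : Finset n, rowRank (diagIdem F s) = rowRank x := by
  have hx : rowRank x ≤ (Finset.univ : Finset n).card := by
    simpa [rowRank_one] using rowRank_mul_le_left 1 x
  obtain ⟨s, -, hs⟩ := Finset.exists_subset_card_eq hx
  exact ⟨s, (rowRank_diagIdem s).trans hs⟩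

lemma IsPseudoRankFunction.eq_normRank (hN : IsPseudoRankFunction N) : N = normRank := by
  funext x
  obtain ⟨s, hs⟩ := exists_rowRank_diagIdem_eq x
  rw [le_antisymm (hN.le_of_rowRank_le hs.ge) (hN.le_of_rowRank_le hs.le), hN.map_diagIdem,
    normRank, ← hs, rowRank_diagIdem]

lemma IsPseudoRankFunction.apply_eq_normRank {R : Type*} [Ring R] {N : R → ℝ}
    (hN : IsPseudoRankFunction N) (φ : R ≃+* Matrix n n F) (x : R) : N x = normRank (φ x) := by
  have h := (hN.comp φ.symm.toRingHom).eq_normRank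
  simpa using congrFun h (φ x)

end DiagonalIdempotents

/-! ### Comparison of elements by rank -/

/-- Elements of smaller rank factor through elements of larger rank. -/
def HasRankComparison {R : Type*} [Ring R] (N : R → ℝ) : Prop :=
  ∀ x y : R, N x ≤ N y → ∃ p q : R, p * y * q = x

/-- Whenever the rank of `a` is at most that of an idempotent `e`, some involution `v` moves `a`
into the left ideal generated by `e`, and `v` is as close to `1` as `a` is to `a * e`. -/
def HasCornerInvolutions {R : Type*} [Ring R] (N : R → ℝ) : Prop :=
  ∀ e a : R, IsIdempotentElem e → N a ≤ N e →
    ∃ v : R, v * v = 1 ∧ a * v * e = a * v ∧ N (v - 1) ≤ N (a * (1 - e))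

section CornerInvolutions

open Module LinearMap

variable {F : Type*} [DivisionRing F] {U V : Type*} [AddCommGroup U] [Module F U]
  [AddCommGroup V] [Module F V]

lemma exists_involution_swap [FiniteDimensional F U] {ι j : U →ₗ[F] V} {C : Submodule F V}
    (hinj : Function.Injective (ι.coprod (j.coprod C.subtype))) :
    ∃ v : V →ₗ[F] V, v ∘ₗ v = .id ∧ v ∘ₗ ι = j ∧ (∀ c ∈ C, v c = c) ∧
      finrank F (range (v - .id)) ≤ finrank F U := by
  obtain ⟨Λ, hΛ⟩ := LinearMap.exists_leftInverse_of_injective _ (ker_eq_bot.2 hinj)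
  let π : V →ₗ[F] U := fst F U (U × C) ∘ₗ Λ - fst F U C ∘ₗ snd F U (U × C) ∘ₗ Λ
  have hΛ' (x y : U) (c : C) : Λ (ι x + (j y + c)) = (x, y, c) :=
    LinearMap.congr_fun hΛ (x, y, c)
  have πι (x : U) : π (ι x) = x := by simpa [π] using congrArg (fun t => t.1 - t.2.1) (hΛ' x 0 0)
  have πj (x : U) : π (j x) = -x := by simpa [π] using congrArg (fun t => t.1 - t.2.1) (hΛ' 0 x 0)
  have πC (c : C) : π c = 0 := by simpa [π] using congrArg (fun t => t.1 - t.2.1) (hΛ' 0 0 c)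
  refine ⟨.id + (j - ι) ∘ₗ π, ?_, ?_, fun c hc => ?_, ?_⟩
  · ext w
    simp only [coe_comp, Function.comp_apply, LinearMap.add_apply, LinearMap.sub_apply, id_apply,
      map_add, map_sub, πι, πj, map_neg]
    abel
  · ext x
    simp [πι]
  · simp [πC ⟨c, hc⟩]
  · rw [add_sub_cancel_left, range_comp]
    exact (Submodule.finrank_map_le _ _).trans (Submodule.finrank_le _)

lemma injective_coprod_coprod {C P Q : Submodule F V} (hP : Disjoint P (C ⊔ Q))
    (hQ : Disjoint C Q) {j : P →ₗ[F] Q} (hj : Function.Injective j) :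
    Function.Injective (P.subtype.coprod ((Q.subtype ∘ₗ j).coprod C.subtype)) := by
  have hrange : range (Q.subtype ∘ₗ j) ≤ Q :=
    (range_comp_le_range _ _).trans (Submodule.range_subtype Q).le
  have hdisjC : Disjoint (range (Q.subtype ∘ₗ j)) (range C.subtype) := by
    rw [Submodule.range_subtype]
    exact hQ.symm.mono_left hrange
  have hdisjP : Disjoint (range P.subtype) (range ((Q.subtype ∘ₗ j).coprod C.subtype)) := by
    rw [Submodule.range_subtype, range_coprod, Submodule.range_subtype]
    exact hP.mono_right (sup_comm C Q ▸ sup_le_sup_right hrange C)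
  rw [← ker_eq_bot, ker_coprod_of_disjoint_range _ _ hdisjP,
    ker_coprod_of_disjoint_range _ _ hdisjC,
    ker_comp, Submodule.ker_subtype, Submodule.ker_subtype, Submodule.ker_subtype,
    Submodule.comap_bot, ker_eq_bot.2 hj, Submodule.prod_bot, Submodule.prod_bot]

lemma exists_involution_map_le [FiniteDimensional F V] {P Q : Submodule F V}
    (h : finrank F P ≤ finrank F Q) :
    ∃ v : V →ₗ[F] V, v ∘ₗ v = .id ∧ P.map v ≤ Q ∧
      finrank F (range (v - .id)) + finrank F (P ⊓ Q : Submodule F V) ≤ finrank F P := by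
  obtain ⟨P₁, hP₁, hsupP⟩ := IsModularLattice.exists_disjoint_and_sup_eq (inf_le_left : P ⊓ Q ≤ P)
  obtain ⟨Q₁, hQ₁, hsupQ⟩ := IsModularLattice.exists_disjoint_and_sup_eq (inf_le_right : P ⊓ Q ≤ Q)
  have hdimP := Submodule.finrank_sup_add_finrank_inf_eq (P ⊓ Q) P₁
  have hdimQ := Submodule.finrank_sup_add_finrank_inf_eq (P ⊓ Q) Q₁
  rw [hsupP, hP₁.eq_bot, finrank_bot, add_zero] at hdimP
  rw [hsupQ, hQ₁.eq_bot, finrank_bot, add_zero] at hdimQ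
  obtain ⟨j, hj⟩ : ∃ j : P₁ →ₗ[F] Q₁, Function.Injective j :=
    _root_.finrank_le_iff_exists_linearMap.1 (by omega)
  have hP₁Q : Disjoint P₁ (P ⊓ Q ⊔ Q₁) := by
    rw [hsupQ, Submodule.disjoint_def]
    exact fun x hx hxQ => Submodule.disjoint_def.1 hP₁ x
      ⟨hsupP ▸ Submodule.mem_sup_right hx, hxQ⟩ hx
  obtain ⟨v, hvv, hvj, hvC, hrange⟩ := exists_involution_swap (injective_coprod_coprod hP₁Q hQ₁ hj)
  refine ⟨v, hvv, ?_, by omega⟩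
  rw [← hsupP, Submodule.map_sup, sup_le_iff, Submodule.map_le_iff_le_comap,
    Submodule.map_le_iff_le_comap]
  refine ⟨fun c hc => ?_, fun x hx => ?_⟩
  · rw [Submodule.mem_comap, hvC c hc]
    exact hc.2
  · have hvx : v x = j ⟨x, hx⟩ := LinearMap.congr_fun hvj ⟨x, hx⟩
    rw [Submodule.mem_comap, hvx, ← hsupQ]
    exact Submodule.mem_sup_right (j _).2

lemma exists_involution_comp_eq [FiniteDimensional F V] {e f : V →ₗ[F] V} (he : e ∘ₗ e = e)
    (h : finrank F (range f) ≤ finrank F (range e)) :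
    ∃ v : V →ₗ[F] V, v ∘ₗ v = .id ∧ e ∘ₗ v ∘ₗ f = v ∘ₗ f ∧
      finrank F (range (v - .id)) ≤ finrank F (range ((.id - e) ∘ₗ f)) := by
  obtain ⟨v, hvv, hmap, hdim⟩ := exists_involution_map_le h
  refine ⟨v, hvv, LinearMap.ext fun w => ?_, ?_⟩
  · obtain ⟨w', hw'⟩ : v (f w) ∈ range e := hmap ⟨f w, ⟨w, rfl⟩, rfl⟩
    change e (v (f w)) = v (f w)
    rw [← hw']
    exact LinearMap.congr_fun he w'
  · have hker : ker (.id - e) ≤ range e := fun w hw => ⟨w, (sub_eq_zero.1 hw).symm⟩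
    have hle : finrank F (range f ⊓ ker (.id - e) : Submodule F V) ≤
        finrank F (range f ⊓ range e : Submodule F V) :=
      Submodule.finrank_mono (inf_le_inf_left _ hker)
    have hmap := finrank_map_add_finrank_inf_ker (.id - e) (range f)
    rw [range_comp]
    omega

variable {n : Type*} [Fintype n] [DecidableEq n]

lemma exists_involution_mul_of_rowRank_le {e a : Matrix n n F} (he : IsIdempotentElem e)
    (hae : rowRank a ≤ rowRank e) :
    ∃ v : Matrix n n F, v * v = 1 ∧ a * v * e = a * v ∧
      rowRank (v - 1) ≤ rowRank (a * (1 - e)) := by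
  obtain ⟨V, hVV, hcorner, hdim⟩ := exists_involution_comp_eq
    ((Matrix.toLinearMapRight'_mul e e).symm.trans (congrArg _ he.eq)) hae
  obtain ⟨v, rfl⟩ := Matrix.toLinearMapRight'.surjective V
  refine ⟨v, Matrix.toLinearMapRight'.injective ?_, Matrix.toLinearMapRight'.injective ?_, ?_⟩
  · rw [Matrix.toLinearMapRight'_mul, hVV, Matrix.toLinearMapRight'_one]
  · rw [Matrix.toLinearMapRight'_mul, Matrix.toLinearMapRight'_mul, hcorner]
  · rwa [rowRank, rowRank, Matrix.toLinearMapRight'_mul, map_sub, map_sub,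
      Matrix.toLinearMapRight'_one]

variable [Nonempty n]

lemma hasRankComparison_normRank : HasRankComparison (normRank (F := F) (n := n)) :=
  fun _ _ h => exists_mul_mul_eq_of_rowRank_le (normRank_le_normRank_iff.1 h)

lemma hasCornerInvolutions_normRank : HasCornerInvolutions (normRank (F := F) (n := n)) := by
  intro e a he hae
  obtain ⟨v, hvv, hcorner, hdim⟩ :=
    exists_involution_mul_of_rowRank_le he (normRank_le_normRank_iff.1 hae)
  exact ⟨v, hvv, hcorner, normRank_le_normRank_iff.2 hdim⟩

end CornerInvolutions

/-! ### Limits in the rank metric -/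

section RankMetric

open Filter Topology

variable {R : Type*} [Ring R] {N : R → ℝ} {u v : ℕ → R} {x y : R}

lemma rankTendsto_iff (hN : IsPseudoRankFunction N) :
    RankTendsto N u x ↔ Tendsto (fun n => N (u n - x)) atTop (𝓝 0) := by
  simp only [RankTendsto, Metric.tendsto_atTop, Real.dist_0_eq_abs, abs_of_nonneg (hN.nonneg _),
    ge_iff_le]

lemma rankTendsto_const (hN : IsPseudoRankFunction N) (x : R) : RankTendsto N (fun _ => x) x := by
  simp [rankTendsto_iff hN, hN.map_zero]

namespace RankTendsto

lemma add (hN : IsPseudoRankFunction N) (hu : RankTendsto N u x) (hv : RankTendsto N v y) :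
    RankTendsto N (u + v) (x + y) := by
  rw [rankTendsto_iff hN] at *
  refine squeeze_zero (fun _ => hN.nonneg _) (fun n => ?_)
    (by simpa only [add_zero] using hu.add hv)
  rw [Pi.add_apply, add_sub_add_comm]
  exact hN.subadditive _ _

lemma mul (hN : IsPseudoRankFunction N) (hu : RankTendsto N u x) (hv : RankTendsto N v y) :
    RankTendsto N (u * v) (x * y) := by
  rw [rankTendsto_iff hN] at *
  refine squeeze_zero (fun _ => hN.nonneg _) (fun n => ?_)
    (by simpa only [add_zero] using hu.add hv)
  calc N (u n * v n - x * y) = N ((u n - x) * v n + x * (v n - y)) := by congr 1; noncomm_ring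
    _ ≤ N ((u n - x) * v n) + N (x * (v n - y)) := hN.subadditive _ _
    _ ≤ N (u n - x) + N (v n - y) := add_le_add (hN.mul_le_left _ _) (hN.mul_le_right _ _)

lemma unique (hN : IsRankFunction N) (hx : RankTendsto N u x) (hy : RankTendsto N u y) :
    x = y := by
  rw [rankTendsto_iff hN.1] at *
  refine sub_eq_zero.1 (hN.2 _ (le_antisymm ?_ (hN.1.nonneg _)))
  refine ge_of_tendsto' (by simpa only [add_zero] using hx.add hy) fun n => ?_
  rw [hN.1.map_sub_comm (u n) x]
  exact hN.1.map_sub_le_add x (u n) y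

lemma tendsto_map (hN : IsPseudoRankFunction N) (hu : RankTendsto N u x) :
    Tendsto (fun n => N (u n)) atTop (𝓝 (N x)) := by
  rw [rankTendsto_iff hN] at hu
  exact tendsto_iff_dist_tendsto_zero.2
    (squeeze_zero (fun _ => dist_nonneg) (fun n => hN.abs_sub_le_map_sub (u n) x) hu)

lemma exists_unit (hN : IsRankFunction N) {u : ℕ → Rˣ} (hu : RankTendsto N (fun n => ↑(u n)) x)
    (hu' : RankTendsto N (fun n => ↑(u n)⁻¹) y) : ∃ w : Rˣ, (w : R) = x := by
  have hxy : x * y = 1 := (hu.mul hN.1 hu').unique hN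
    (by simpa [Pi.mul_def] using rankTendsto_const hN.1 1)
  have hyx : y * x = 1 := (hu'.mul hN.1 hu).unique hN
    (by simpa [Pi.mul_def] using rankTendsto_const hN.1 1)
  exact ⟨⟨x, y, hxy, hyx⟩, rfl⟩

end RankTendsto

lemma RankComplete.exists_rankTendsto_of_le_geometric (hcomplete : RankComplete N)
    (hN : IsPseudoRankFunction N) {C : ℝ} (hu : ∀ j, N (u (j + 1) - u j) ≤ C * (1 / 2) ^ j) :
    ∃ x, RankTendsto N u x := by
  let : PseudoMetricSpace R :=
    { dist x y := N (x - y)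
      dist_self x := by simp [hN.map_zero]
      dist_comm := hN.map_sub_comm
      dist_triangle := hN.map_sub_le_add }
  have hcauchy : CauchySeq u := cauchySeq_of_le_geometric (1 / 2) C (by norm_num) fun j =>
    (hN.map_sub_comm _ _).trans_le (hu j)
  refine hcomplete u fun ε hε => ?_
  obtain ⟨n₀, h⟩ := Metric.cauchySeq_iff.1 hcauchy ε hε
  exact ⟨n₀, fun m n hm hn => h m hm n hn⟩

end RankMetric

/-! ### Completions along a dense ring homomorphism -/

section CornerUnits

variable {B : Type*} [Ring B] {N : B → ℝ} {e : B}

lemma HasCornerInvolutions.exists_unit (hcorner : HasCornerInvolutions N)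
    (hN : IsPseudoRankFunction N) (he : IsIdempotentElem e) {b : B} (hbe : N b ≤ N e) (u : Bˣ) :
    ∃ w : Bˣ, b * w * e = b * w ∧ N (w - u) ≤ N (b * u * (1 - e)) ∧
      N (↑w⁻¹ - ↑u⁻¹) ≤ N (b * u * (1 - e)) := by
  obtain ⟨v, hvv, hve, hv⟩ := hcorner e (b * u) he ((hN.mul_le_left _ _).trans hbe)
  let V : Bˣ := ⟨v, v, hvv, hvv⟩
  refine ⟨u * V, ?_, ?_, ?_⟩
  · simpa only [Units.val_mul, ← mul_assoc] using hve
  · rw [show ((u * V : Bˣ) : B) - u = u * (v - 1) by rw [mul_sub, mul_one]; rfl]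
    exact (hN.mul_le_right _ _).trans hv
  · rw [show (((u * V)⁻¹ : Bˣ) : B) - ↑u⁻¹ = (v - 1) * ↑u⁻¹ by
      rw [mul_inv_rev, sub_mul, one_mul]; rfl]
    exact (hN.mul_le_left _ _).trans hv

lemma HasCornerInvolutions.exists_units_seq (hcorner : HasCornerInvolutions N)
    (hN : IsPseudoRankFunction N) (he : IsIdempotentElem e) {b : ℕ → B}
    (hbe : ∀ j, N (b j) ≤ N e) :
    ∃ u : ℕ → Bˣ, ∀ j, b j * u j * e = b j * u j ∧
      N (u (j + 1) - u j) ≤ N (b (j + 1) - b j) ∧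
      N (↑(u (j + 1))⁻¹ - ↑(u j)⁻¹) ≤ N (b (j + 1) - b j) := by
  obtain ⟨u₀, hu₀, -⟩ := hcorner.exists_unit hN he (hbe 0) 1
  have step (j : ℕ) (u : {u : Bˣ // b j * u * e = b j * u}) :
      ∃ w : {w : Bˣ // b (j + 1) * w * e = b (j + 1) * w},
        N (w.1 - u.1) ≤ N (b (j + 1) - b j) ∧
        N (↑w.1⁻¹ - ↑u.1⁻¹) ≤ N (b (j + 1) - b j) := by
    have hdefect : N (b (j + 1) * u.1 * (1 - e)) ≤ N (b (j + 1) - b j) := by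
      have hzero : b j * u.1 * (1 - e) = 0 := by rw [mul_sub, mul_one, u.2, sub_self]
      rw [← sub_zero (b (j + 1) * u.1 * (1 - e)), ← hzero, ← sub_mul, ← sub_mul]
      exact (hN.mul_le_left _ _).trans (hN.mul_le_left _ _)
    obtain ⟨w, hw, hwu, hwu'⟩ := hcorner.exists_unit hN he (hbe (j + 1)) u.1
    exact ⟨⟨w, hw⟩, hwu.trans hdefect, hwu'.trans hdefect⟩
  choose next hnext using step
  let u (j : ℕ) : {u : Bˣ // b j * u * e = b j * u} := Nat.rec ⟨u₀, hu₀⟩ next j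
  exact ⟨fun j => (u j).1, fun j => ⟨(u j).2, hnext j (u j)⟩⟩

end CornerUnits

/-- There are nonzero idempotents of arbitrarily small positive rank. -/
def HasSmallIdempotents {R : Type*} [Ring R] (N : R → ℝ) : Prop :=
  ∀ ε : ℝ, 0 < ε → ∃ e : R, IsIdempotentElem e ∧ 0 < N e ∧ N e < ε

section Completion

variable {B M : Type*} [Ring B] [Ring M] {N : M → ℝ} {f : B →+* M}

lemma RankDense.exists_seq_range (hdense : RankDense N (Set.range f))
    (hN : IsPseudoRankFunction N) (x : M) {δ : ℝ} (hδ : 0 < δ) :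
    ∃ b : ℕ → B, (∀ j, N (f (b j) - x) ≤ δ * (1 / 2) ^ j) ∧
      ∀ j, N (f (b (j + 1) - b j)) ≤ 2 * δ * (1 / 2) ^ j := by
  have happrox (j : ℕ) : ∃ b, N (f b - x) ≤ δ * (1 / 2) ^ j := by
    obtain ⟨_, ⟨b, rfl⟩, hb⟩ := hdense x (δ * (1 / 2) ^ j) (by positivity)
    exact ⟨b, (hN.map_sub_comm _ _).trans_le hb.le⟩
  choose b hb using happrox
  refine ⟨b, hb, fun j => ?_⟩
  have htriangle := hN.map_sub_le_add (f (b (j + 1))) x (f (b j))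
  have hj := hb j
  have hj' := hb (j + 1)
  have hpos : 0 ≤ δ * (1 / 2) ^ j := by positivity
  rw [map_sub]
  rw [hN.map_sub_comm x] at htriangle
  rw [pow_succ] at hj'
  linarith

-- Corner units for approximations of `x` converge because consecutive ones differ by at most the
-- rank distance of the approximations.
lemma exists_unit_mul_of_rank_lt (hN : IsRankFunction N) (hcomplete : RankComplete N)
    (hdense : RankDense N (Set.range f)) (hcorner : HasCornerInvolutions (N ∘ f)) {e : B}
    (he : IsIdempotentElem e) {x : M} (hx : N x < N (f e)) :
    ∃ u : Mˣ, x * u * f e = x * u := by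
  obtain ⟨b, hb, hbb⟩ := hdense.exists_seq_range hN.1 x (sub_pos.2 hx)
  have hbe (j : ℕ) : N (f (b j)) ≤ N (f e) := by
    have hle := hN.1.le_add_map_sub (f (b j)) x
    have hpow : (N (f e) - N x) * (1 / 2) ^ j ≤ N (f e) - N x :=
      mul_le_of_le_one_right (sub_pos.2 hx).le (pow_le_one₀ (by norm_num) (by norm_num))
    linarith [hb j]
  obtain ⟨u, hu⟩ := hcorner.exists_units_seq (hN.1.comp f) he hbe
  obtain ⟨U, hU⟩ := hcomplete.exists_rankTendsto_of_le_geometric hN.1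
    (u := fun j => f (u j)) fun j => by simpa using (hu j).2.1.trans (hbb j)
  obtain ⟨U', hU'⟩ := hcomplete.exists_rankTendsto_of_le_geometric hN.1
    (u := fun j => f ↑(u j)⁻¹) fun j => by simpa using (hu j).2.2.trans (hbb j)
  obtain ⟨w, rfl⟩ := RankTendsto.exists_unit hN (u := fun j => Units.map (f : B →* M) (u j)) hU hU'
  have hbx : RankTendsto N (fun j => f (b j)) x := by
    rw [rankTendsto_iff hN.1]
    refine squeeze_zero (fun _ => hN.1.nonneg _) hb ?_
    simpa using (tendsto_pow_atTop_nhds_zero_of_lt_one (r := (1 / 2 : ℝ)) (by norm_num)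
      (by norm_num)).const_mul (N (f e) - N x)
  refine ⟨w, RankTendsto.unique hN (((hbx.mul hN.1 hU).mul hN.1 (rankTendsto_const hN.1 _))) ?_⟩
  convert hbx.mul hN.1 hU using 1
  funext j
  simpa using congrArg f (hu j).1

lemma eq_of_eqOn_dense {N' : M → ℝ} (hN : IsRankFunction N) (hcomplete : RankComplete N)
    (hdense : RankDense N (Set.range f)) (hcorner : HasCornerInvolutions (N ∘ f))
    (hsmall : HasSmallIdempotents (N ∘ f)) (hN' : IsPseudoRankFunction N')
    (heq : ∀ b, N' (f b) = N (f b)) : N' = N := by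
  refine hN.1.eq_of_forall_exists_approx hN' fun x ε hε => ?_
  obtain ⟨e, he, hpos, hlt⟩ := hsmall ε hε
  obtain ⟨_, ⟨b, rfl⟩, hb⟩ := hdense x (N (f e)) hpos
  refine ⟨f b, heq b, (hb.trans hlt).le, ?_⟩
  obtain ⟨u, hu⟩ := exists_unit_mul_of_rank_lt hN hcomplete hdense hcorner he hb
  calc N' (x - f b) = N' ((x - f b) * u * f e * ↑u⁻¹) := by rw [hu, Units.mul_inv_cancel_right]
    _ ≤ N' (f e) := (hN'.mul_le_left _ _).trans (hN'.mul_le_right _ _)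
    _ ≤ ε := (heq e).trans_le hlt.le

/-- The closure of a two-sided ideal in the rank metric. -/
def rankClosure (hN : IsPseudoRankFunction N) (J : TwoSidedIdeal M) : TwoSidedIdeal M :=
  .mk' {x | ∀ ε > 0, ∃ y ∈ J, N (x - y) < ε}
    (fun ε hε => ⟨0, J.zero_mem, by simpa [hN.map_zero] using hε⟩)
    (fun {x y} hx hy ε hε => by
      obtain ⟨x', hx', hxx'⟩ := hx (ε / 2) (half_pos hε)
      obtain ⟨y', hy', hyy'⟩ := hy (ε / 2) (half_pos hε)
      refine ⟨x' + y', J.add_mem hx' hy', ?_⟩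
      rw [add_sub_add_comm]
      linarith [hN.subadditive (x - x') (y - y')])
    (fun {x} hx ε hε => by
      obtain ⟨x', hx', hxx'⟩ := hx ε hε
      exact ⟨-x', J.neg_mem hx', by rwa [← neg_sub', hN.map_neg]⟩)
    (fun {x y} hy ε hε => by
      obtain ⟨y', hy', hyy'⟩ := hy ε hε
      exact ⟨x * y', J.mul_mem_left _ _ hy', by
        rw [← mul_sub]; exact (hN.mul_le_right _ _).trans_lt hyy'⟩)
    (fun {x y} hx ε hε => by
      obtain ⟨x', hx', hxx'⟩ := hx ε hε
      exact ⟨x' * y, J.mul_mem_right _ _ hx', by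
        rw [← sub_mul]; exact (hN.mul_le_left _ _).trans_lt hxx'⟩)

lemma mem_rankClosure {hN : IsPseudoRankFunction N} {J : TwoSidedIdeal M} {x : M} :
    x ∈ rankClosure hN J ↔ ∀ ε > 0, ∃ y ∈ J, N (x - y) < ε :=
  TwoSidedIdeal.mem_mk' ..

lemma one_mem_rankClosure [IsSimpleRing B] (hN : IsRankFunction N)
    (hdense : RankDense N (Set.range f)) (hcomp : HasRankComparison (N ∘ f))
    (hsmall : HasSmallIdempotents (N ∘ f)) {J : TwoSidedIdeal M} {x : M} (hx : x ≠ 0)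
    (hxJ : x ∈ J) : 1 ∈ rankClosure hN.1 J := by
  have hNx : 0 < N x := (hN.1.nonneg x).lt_of_ne fun h => hx (hN.2 x h.symm)
  obtain ⟨e, -, hpos, hlt⟩ := hsmall (N x / 2) (half_pos hNx)
  have he : e ≠ 0 := by
    rintro rfl
    simp [hN.1.map_zero] at hpos
  refine one_mem_of_map_mem f he (mem_rankClosure.2 fun ε hε => ?_)
  obtain ⟨_, ⟨b, rfl⟩, hb⟩ := hdense x (min ε (N x / 2)) (lt_min hε (half_pos hNx))
  have hle : N (f e) ≤ N (f b) := by
    have htriangle := hN.1.le_add_map_sub x (f b)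
    have hb' := hb.trans_le (min_le_right _ _)
    simp only [Function.comp_apply] at hlt
    linarith
  obtain ⟨p, q, rfl⟩ := hcomp e b hle
  refine ⟨f p * x * f q, J.mul_mem_right _ _ (J.mul_mem_left _ _ hxJ), ?_⟩
  rw [map_mul, map_mul, ← sub_mul, ← mul_sub]
  refine ((hN.1.mul_le_left _ _).trans (hN.1.mul_le_right _ _)).trans_lt ?_
  rw [hN.1.map_sub_comm]
  exact hb.trans_le (min_le_left _ _)

lemma isSimpleRing_of_dense [IsSimpleRing B] (hN : IsRankFunction N) (hcomplete : RankComplete N)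
    (hdense : RankDense N (Set.range f)) (hcorner : HasCornerInvolutions (N ∘ f))
    (hcomp : HasRankComparison (N ∘ f)) (hsmall : HasSmallIdempotents (N ∘ f)) :
    IsSimpleRing M := by
  have := hN.1.nontrivial
  refine isSimpleRing_of_forall_one_mem fun J x hx hxJ => ?_
  obtain ⟨e, he, hpos, hlt⟩ := hsmall 1 one_pos
  obtain ⟨y, hyJ, hy⟩ :=
    mem_rankClosure.1 (one_mem_rankClosure hN hdense hcomp hsmall hx hxJ) _ hpos
  obtain ⟨u, hu⟩ := exists_unit_mul_of_rank_lt hN hcomplete hdense hcorner he hy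
  have he1 : 1 - e ≠ 0 := fun h => by
    simp [← sub_eq_zero.1 h, hN.1.map_one] at hlt
  have hcorner_eq : f (1 - e) = ↑u⁻¹ * y * (u * f (1 - e)) := by
    have hzero : (1 - y) * u * f (1 - e) = 0 := by
      rw [map_sub, map_one, mul_sub, mul_one, hu, sub_self]
    rw [sub_mul, sub_mul, one_mul, sub_eq_zero] at hzero
    rw [mul_assoc, ← mul_assoc y, ← hzero, Units.inv_mul_cancel_left]
  refine one_mem_of_map_mem f he1 ?_
  rw [hcorner_eq]
  exact J.mul_mem_right _ _ (J.mul_mem_left _ _ hyJ)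

end Completion

/-! ### Towers of matrix algebras -/

section MatrixRing

variable {R F ι : Type*} [Ring R] [DivisionRing F] [Fintype ι] [Nonempty ι] {N : R → ℝ}

lemma HasRankComparison.of_ringEquiv (hN : IsPseudoRankFunction N) (φ : R ≃+* Matrix ι ι F) :
    HasRankComparison N := by
  classical
  intro x y hxy
  simp only [hN.apply_eq_normRank φ] at hxy
  obtain ⟨p, q, hpq⟩ := hasRankComparison_normRank _ _ hxy
  exact ⟨φ.symm p, φ.symm q, φ.injective (by simpa using hpq)⟩

lemma HasCornerInvolutions.of_ringEquiv (hN : IsPseudoRankFunction N) (φ : R ≃+* Matrix ι ι F) :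
    HasCornerInvolutions N := by
  classical
  intro e a he hae
  simp only [hN.apply_eq_normRank φ] at hae ⊢
  obtain ⟨v, hvv, hcorner, hv⟩ := hasCornerInvolutions_normRank _ _ (he.map φ) hae
  refine ⟨φ.symm v, φ.injective ?_, φ.injective ?_, ?_⟩
  · simpa using hvv
  · simpa using hcorner
  · simpa using hv

lemma exists_isIdempotentElem_rank_eq (hN : IsPseudoRankFunction N) (φ : R ≃+* Matrix ι ι F) :
    ∃ e : R, IsIdempotentElem e ∧ N e = 1 / Fintype.card ι := by
  classical
  let i : ι := Classical.arbitrary ι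
  refine ⟨φ.symm (diagIdem F {i}), (isIdempotentElem_diagIdem {i}).map φ.symm, ?_⟩
  have h := (hN.comp φ.symm.toRingHom).map_diagIdem {i}
  simpa using h

end MatrixRing

section Union

variable {K M : Type*} [CommRing K] [Ring M] [Algebra K M] {N : M → ℝ}
  {A : ℕ → Subalgebra K M}

lemma coe_iSup_subalgebra (hA : Monotone A) : ((⨆ k, A k : Subalgebra K M) : Set M) = ⋃ k, A k :=
  Subalgebra.coe_iSup_of_directed hA.directed_le

lemma exists_inclusion_eq (hA : Monotone A) (x y : (⨆ k, A k : Subalgebra K M)) :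
    ∃ (k : ℕ) (x' y' : A k), Subalgebra.inclusion (le_iSup A k) x' = x ∧
      Subalgebra.inclusion (le_iSup A k) y' = y := by
  have mem (z : (⨆ k, A k : Subalgebra K M)) : ∃ k, (z : M) ∈ A k :=
    Set.mem_iUnion.1 (coe_iSup_subalgebra hA ▸ z.2)
  obtain ⟨k, hk⟩ := mem x
  obtain ⟨l, hl⟩ := mem y
  exact ⟨max k l, ⟨x, hA (le_max_left k l) hk⟩, ⟨y, hA (le_max_right k l) hl⟩, rfl, rfl⟩

lemma rankDense_range_iSup (hA : Monotone A) (hdense : RankDense N (⋃ k, (A k : Set M))) :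
    RankDense N (Set.range (⨆ k, A k : Subalgebra K M).val.toRingHom) := by
  rw [← coe_iSup_subalgebra hA] at hdense
  exact fun x ε hε => (hdense x ε hε).imp fun y hy => ⟨⟨⟨y, hy.1⟩, rfl⟩, hy.2⟩

lemma HasRankComparison.iSup (hA : Monotone A)
    (h : ∀ k, HasRankComparison (N ∘ (A k).val)) :
    HasRankComparison (N ∘ (⨆ k, A k : Subalgebra K M).val) := by
  intro x y hxy
  obtain ⟨k, x, y, rfl, rfl⟩ := exists_inclusion_eq hA x y
  obtain ⟨p, q, hpq⟩ := h k x y hxy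
  exact ⟨Subalgebra.inclusion (le_iSup A k) p, Subalgebra.inclusion (le_iSup A k) q, by
    rw [← map_mul, ← map_mul, hpq]⟩

lemma HasCornerInvolutions.iSup (hA : Monotone A)
    (h : ∀ k, HasCornerInvolutions (N ∘ (A k).val)) :
    HasCornerInvolutions (N ∘ (⨆ k, A k : Subalgebra K M).val) := by
  intro e a he hae
  obtain ⟨k, e, a, rfl, rfl⟩ := exists_inclusion_eq hA e a
  have he' : IsIdempotentElem e := Subalgebra.inclusion_injective (le_iSup A k) (by
    rw [map_mul, he.eq])
  obtain ⟨v, hvv, hcorner, hv⟩ := h k e a he' hae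
  refine ⟨Subalgebra.inclusion (le_iSup A k) v, ?_, ?_, hv⟩
  · rw [← map_mul, hvv, map_one]
  · rw [← map_mul, ← map_mul, hcorner]

lemma isSimpleRing_iSup (hA : Monotone A) (h : ∀ k, IsSimpleRing (A k)) :
    IsSimpleRing (⨆ k, A k : Subalgebra K M) := by
  have : Nontrivial (⨆ k, A k : Subalgebra K M) :=
    (Subalgebra.inclusion_injective (le_iSup A 0)).nontrivial
  refine isSimpleRing_of_forall_one_mem fun J x hx hxJ => ?_
  obtain ⟨k, x, -, rfl, -⟩ := exists_inclusion_eq hA x x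
  exact one_mem_of_map_mem (Subalgebra.inclusion (le_iSup A k)).toRingHom
    (fun h0 => hx (by rw [h0, map_zero])) hxJ

end Union

section Tower

open Filter

variable {K M : Type*} [Field K] [Ring M] [Algebra K M] {N : M → ℝ} {A : ℕ → Subalgebra K M}
  {ι : ℕ → Type*} [∀ k, Fintype (ι k)] [∀ k, DecidableEq (ι k)] [∀ k, Nonempty (ι k)]

lemma hasSmallIdempotents_iSup (hN : IsPseudoRankFunction N)
    (φ : ∀ k, A k ≃ₐ[K] Matrix (ι k) (ι k) K)
    (hι : Tendsto (fun k => Fintype.card (ι k)) atTop atTop) :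
    HasSmallIdempotents (N ∘ (⨆ k, A k : Subalgebra K M).val) := by
  intro ε hε
  obtain ⟨k, hk⟩ := ((tendsto_natCast_atTop_atTop.comp hι).eventually_gt_atTop ε⁻¹).exists
  obtain ⟨e, he, hrank⟩ := exists_isIdempotentElem_rank_eq (hN.comp (A k).val.toRingHom)
    (φ k).toRingEquiv
  refine ⟨Subalgebra.inclusion (le_iSup A k) e, he.map _, ?_⟩
  change 0 < (N ∘ (A k).val.toRingHom) e ∧ (N ∘ (A k).val.toRingHom) e < ε
  rw [hrank]
  exact ⟨by positivity, (one_div_lt (by positivity) hε).2 (by simpa using hk)⟩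

lemma hasCornerInvolutions_iSup (hN : IsPseudoRankFunction N) (hA : Monotone A)
    (φ : ∀ k, A k ≃ₐ[K] Matrix (ι k) (ι k) K) :
    HasCornerInvolutions (N ∘ (⨆ k, A k : Subalgebra K M).val) :=
  .iSup hA fun k => .of_ringEquiv (hN.comp (A k).val.toRingHom) (φ k).toRingEquiv

theorem IsPseudoRankFunction.eq_of_tower {N' : M → ℝ} (hN' : IsPseudoRankFunction N')
    (hN : IsRankFunction N) (hcomplete : RankComplete N) (hA : Monotone A)
    (φ : ∀ k, A k ≃ₐ[K] Matrix (ι k) (ι k) K) (hdense : RankDense N (⋃ k, (A k : Set M)))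
    (hι : Tendsto (fun k => Fintype.card (ι k)) atTop atTop) : N' = N := by
  refine eq_of_eqOn_dense hN hcomplete (rankDense_range_iSup hA hdense)
    (hasCornerInvolutions_iSup hN.1 hA φ) (hasSmallIdempotents_iSup hN.1 φ hι) hN' fun b => ?_
  obtain ⟨k, b, -, rfl, -⟩ := exists_inclusion_eq hA b b
  exact ((hN'.comp (A k).val.toRingHom).apply_eq_normRank (φ k).toRingEquiv b).trans
    ((hN.1.comp (A k).val.toRingHom).apply_eq_normRank (φ k).toRingEquiv b).symm

theorem isSimpleRing_of_tower (hN : IsRankFunction N) (hcomplete : RankComplete N)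
    (hA : Monotone A) (φ : ∀ k, A k ≃ₐ[K] Matrix (ι k) (ι k) K)
    (hdense : RankDense N (⋃ k, (A k : Set M)))
    (hι : Tendsto (fun k => Fintype.card (ι k)) atTop atTop) : IsSimpleRing M := by
  have : IsSimpleRing (⨆ k, A k : Subalgebra K M) :=
    isSimpleRing_iSup hA fun k => IsSimpleRing.of_ringEquiv (φ k).symm.toRingEquiv inferInstance
  exact isSimpleRing_of_dense hN hcomplete (rankDense_range_iSup hA hdense)
    (hasCornerInvolutions_iSup hN.1 hA φ)
    (.iSup hA fun k => .of_ringEquiv (hN.1.comp (A k).val.toRingHom) (φ k).toRingEquiv)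
    (hasSmallIdempotents_iSup hN.1 φ hι)

end Tower

/-! ### Tensor products with central division algebras -/

section TensorSimple

open Algebra.TensorProduct

variable {K D M : Type*} [Field K] [DivisionRing D] [Algebra K D] [Ring M] [Algebra K M]

lemma repr_tmul_one_mul {ι : Type*} (b : Module.Basis ι K M) (d : D) (x : D ⊗[K] M) (i : ι) :
    (basis D b).repr (d ⊗ₜ 1 * x) i = d * (basis D b).repr x i := by
  induction x with
  | zero => simp
  | tmul c m => simp [basis_repr_tmul, mul_assoc]
  | add x y hx hy => simp only [mul_add, map_add, Finsupp.add_apply, hx, hy]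

lemma repr_mul_tmul_one {ι : Type*} (b : Module.Basis ι K M) (x : D ⊗[K] M) (d : D) (i : ι) :
    (basis D b).repr (x * d ⊗ₜ 1) i = (basis D b).repr x i * d := by
  induction x with
  | zero => simp
  | tmul c m => simp [basis_repr_tmul, mul_assoc, Algebra.commutes]
  | add x y hx hy => simp only [add_mul, map_add, Finsupp.add_apply, hx, hy]

/- A nonzero element of minimal support, scaled to have a coefficient equal to `1`, commutes
with `D ⊗ 1`: its commutators with `D ⊗ 1` have smaller support. -/
lemma exists_mem_forall_commute_tmul_one {J : TwoSidedIdeal (D ⊗[K] M)} {x : D ⊗[K] M}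
    (hx : x ≠ 0) (hxJ : x ∈ J) : ∃ y ∈ J, y ≠ 0 ∧ ∀ d : D, Commute (d ⊗ₜ[K] (1 : M)) y := by
  let b := Module.Basis.ofVectorSpace K M
  let β := basis D b
  obtain ⟨x, ⟨hxJ, hx⟩, hmin⟩ := WellFounded.has_min
    (measure fun y : D ⊗[K] M => (β.repr y).support.card).wf {y | y ∈ J ∧ y ≠ 0} ⟨x, hxJ, hx⟩
  obtain ⟨i, hi⟩ : ∃ i, β.repr x i ≠ 0 :=
    DFunLike.ne_iff.1 ((map_ne_zero_iff _ β.repr.injective).2 hx)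
  have hyJ : (β.repr x i)⁻¹ ⊗ₜ 1 * x ∈ J := J.mul_mem_left _ _ hxJ
  set y := (β.repr x i)⁻¹ ⊗ₜ[K] (1 : M) * x
  have repr_y (j) : β.repr y j = (β.repr x i)⁻¹ * β.repr x j := repr_tmul_one_mul b _ x j
  have repr_y_i : β.repr y i = 1 := by rw [repr_y, inv_mul_cancel₀ hi]
  have repr_comm (d : D) (j) :
      β.repr (d ⊗ₜ 1 * y - y * d ⊗ₜ 1) j = d * β.repr y j - β.repr y j * d := by
    rw [map_sub, Finsupp.sub_apply, repr_tmul_one_mul, repr_mul_tmul_one]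
  refine ⟨y, hyJ, fun h0 => by simp [h0] at repr_y_i, fun d => sub_eq_zero.1 ?_⟩
  by_contra hne
  refine hmin _ ⟨J.sub_mem (J.mul_mem_left _ _ hyJ) (J.mul_mem_right _ _ hyJ), hne⟩
    (Finset.card_lt_card ((Finset.ssubset_iff_of_subset fun j hj => ?_).2 ⟨i, ?_, ?_⟩))
  · contrapose! hj
    rw [Finsupp.notMem_support_iff] at hj ⊢
    rw [repr_comm, repr_y, hj, mul_zero, mul_zero, zero_mul, sub_zero]
  · exact Finsupp.mem_support_iff.2 hi
  · rw [Finsupp.notMem_support_iff, repr_comm, repr_y_i, mul_one, one_mul, sub_self]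

variable [Algebra.IsCentral K D]

lemma range_map_center_val_le :
    (map (Subalgebra.center K D).val (AlgHom.id K M)).range ≤
      (includeRight : M →ₐ[K] D ⊗[K] M).range := by
  rintro _ ⟨z, rfl⟩
  induction z with
  | zero => exact zero_mem _
  | tmul z m =>
    obtain ⟨k, hk⟩ := (Algebra.IsCentral.mem_center_iff K).1 z.2
    exact ⟨k • m, by simp [hk, Algebra.algebraMap_eq_smul_one, TensorProduct.smul_tmul]⟩
  | add z w hz hw => simpa only [map_add] using add_mem hz hw

lemma mem_range_includeRight_of_forall_commute {y : D ⊗[K] M}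
    (hy : ∀ d : D, Commute (d ⊗ₜ[K] (1 : M)) y) :
    y ∈ (includeRight : M →ₐ[K] D ⊗[K] M).range := by
  have hcentralizer : y ∈ Subalgebra.centralizer K
      ((includeLeft : D →ₐ[K] D ⊗[K] M).range : Set (D ⊗[K] M)) :=
    (Subalgebra.mem_centralizer_iff K).2 (by rintro _ ⟨d, rfl⟩; exact hy d)
  rw [Subalgebra.centralizer_coe_range_includeLeft_eq_center_tensorProduct] at hcentralizer
  exact range_map_center_val_le hcentralizer

theorem isSimpleRing_tensorProduct [IsSimpleRing M] : IsSimpleRing (D ⊗[K] M) := by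
  refine isSimpleRing_of_forall_one_mem fun J x hx hxJ => ?_
  obtain ⟨y, hyJ, hy0, hy⟩ := exists_mem_forall_commute_tmul_one hx hxJ
  obtain ⟨m, rfl⟩ := mem_range_includeRight_of_forall_commute hy
  exact one_mem_of_map_mem (includeRight : M →ₐ[K] D ⊗[K] M).toRingHom
    (fun h0 => hy0 (by simp [h0])) hyJ

end TensorSimple

section TensorMatrix

variable {K D A ι : Type*} [Field K] [DivisionRing D] [Algebra K D] [Ring A] [Algebra K A]
  [Fintype ι] [DecidableEq ι]

variable (D) in
/-- The identification of `D ⊗ A` with a matrix algebra over `D` induced by an identification of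
`A` with a matrix algebra over `K`. -/
def tensorMatrixEquiv (φ : A ≃ₐ[K] Matrix ι ι K) : D ⊗[K] A ≃ₐ[K] Matrix ι ι D :=
  (Algebra.TensorProduct.congr .refl φ).trans (matrixEquivTensor ι K D).symm

variable [Nonempty ι]

lemma IsPseudoRankFunction.apply_one_tmul {S : D ⊗[K] A → ℝ} {N : A → ℝ}
    (hS : IsPseudoRankFunction S) (hN : IsPseudoRankFunction N) (φ : A ≃ₐ[K] Matrix ι ι K)
    (a : A) : S (1 ⊗ₜ a) = N a :=
  ((hS.comp (Algebra.TensorProduct.includeRight : A →ₐ[K] D ⊗[K] A).toRingHom).apply_eq_normRank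
    φ.toRingEquiv a).trans (hN.apply_eq_normRank φ.toRingEquiv a).symm

end TensorMatrix

/-! ### Existence of the rank function on the tensor product -/

section Existence

open Filter Topology Algebra.TensorProduct

variable {K D M : Type*} [Field K] [Ring D] [Algebra K D] [Ring M] [Algebra K M] {N : M → ℝ}
  {A : ℕ → Subalgebra K M}

lemma IsPseudoRankFunction.eq_zero_of_map_eq_zero {C : Type*} [Ring C] [Algebra K C]
    {S : D ⊗[K] C → ℝ} (hS : IsPseudoRankFunction S) {f : C →ₐ[K] M}
    (hf : Function.Surjective f) (hker : ∀ c, f c = 0 → S (1 ⊗ₜ c) = 0) {x : D ⊗[K] C}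
    (hx : map (AlgHom.id K D) f x = 0) : S x = 0 := by
  obtain ⟨y, rfl⟩ := (lTensor_exact D f.toLinearMap.exact_subtype_ker_map hf x).1 hx
  clear hx
  refine le_antisymm ?_ (hS.nonneg _)
  induction y with
  | zero => simp [hS.map_zero]
  | tmul d c =>
    calc S (d ⊗ₜ c) = S ((d ⊗ₜ[K] (1 : C)) * ((1 : D) ⊗ₜ[K] (c : C))) := by simp
      _ ≤ S (1 ⊗ₜ c) := hS.mul_le_right _ _
      _ = 0 := hker c c.2
  | add y z hy hz =>
    rw [map_add]
    exact (hS.subadditive _ _).trans (add_nonpos hy hz)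

lemma IsPseudoRankFunction.exists_mem_forall_le_add (hN : IsPseudoRankFunction N)
    (B : Subalgebra K M) (m : M) {ε : ℝ} (hε : 0 < ε) :
    ∃ a : B, ∀ b : B, N (m - a) ≤ N (m - b) + ε := by
  obtain ⟨a, ha⟩ := exists_lt_of_ciInf_lt (lt_add_of_pos_right (⨅ b : B, N (m - b)) hε)
  have hbdd : BddBelow (Set.range fun b : B => N (m - b)) :=
    ⟨0, Set.forall_mem_range.2 fun b => hN.nonneg _⟩
  exact ⟨a, fun b => ha.le.trans (add_le_add_left (ciInf_le hbdd b) ε)⟩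

lemma RankDense.exists_rankTendsto (hdense : RankDense N (⋃ k, (A k : Set M)))
    (hN : IsPseudoRankFunction N) (hA : Monotone A) (m : M) :
    ∃ a : ∀ k, A k, RankTendsto N (fun k => (a k : M)) m := by
  choose a ha using fun k : ℕ =>
    hN.exists_mem_forall_le_add (A k) m (ε := 1 / ((k : ℝ) + 1)) (by positivity)
  refine ⟨a, fun ε hε => ?_⟩
  obtain ⟨y, hy, hyε⟩ := hdense m (ε / 2) (half_pos hε)
  obtain ⟨k₀, hk₀⟩ := Set.mem_iUnion.1 hy
  obtain ⟨k₁, hk₁⟩ := exists_nat_one_div_lt (half_pos hε)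
  refine ⟨max k₀ k₁, fun k hk => ?_⟩
  have hyk : y ∈ A k := hA ((le_max_left _ _).trans hk) hk₀
  calc N (a k - m) = N (m - a k) := hN.map_sub_comm _ _
    _ ≤ N (m - y) + 1 / ((k : ℝ) + 1) := ha k ⟨y, hyk⟩
    _ ≤ N (m - y) + 1 / ((k₁ : ℝ) + 1) := by
      gcongr
      exact (le_max_right _ _).trans hk
    _ < ε := by linarith

/-- The algebra of pairs of an element of `M` and a sequence of elements of the subalgebras `A k`
converging to it. -/
def approximations (hN : IsPseudoRankFunction N) (A : ℕ → Subalgebra K M) :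
    Subalgebra K (M × ∀ k, A k) where
  carrier := {p | RankTendsto N (fun k => (p.2 k : M)) p.1}
  mul_mem' hp hq := hp.mul hN hq
  add_mem' hp hq := hp.add hN hq
  algebraMap_mem' c := rankTendsto_const hN (algebraMap K M c)

namespace approximations

/-- The limit of an approximating sequence. -/
def limit (hN : IsPseudoRankFunction N) (A : ℕ → Subalgebra K M) :
    approximations hN A →ₐ[K] M :=
  (AlgHom.fst K M _).comp (approximations hN A).val

/-- The `k`-th term of an approximating sequence. -/
def term (hN : IsPseudoRankFunction N) (A : ℕ → Subalgebra K M) (k : ℕ) :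
    approximations hN A →ₐ[K] A k :=
  (Pi.evalAlgHom K (fun k => A k) k).comp ((AlgHom.snd K M _).comp (approximations hN A).val)

lemma limit_surjective (hN : IsPseudoRankFunction N) (hA : Monotone A)
    (hdense : RankDense N (⋃ k, (A k : Set M))) : Function.Surjective (limit hN A) := by
  intro m
  obtain ⟨a, ha⟩ := hdense.exists_rankTendsto hN hA m
  exact ⟨⟨(m, a), ha⟩, rfl⟩

variable (S : ∀ k, D ⊗[K] A k → ℝ)

/-- The limiting rank of the approximants: on `D ⊗ approximations hN A`, the ultralimit of the
rank functions `S k` of the `D ⊗ A k`. -/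
def limitRank (hN : IsPseudoRankFunction N) : D ⊗[K] approximations hN A → ℝ :=
  ultraLimit fun k => S k ∘ map (AlgHom.id K D) (term hN A k)

variable {S}

lemma isFrobeniusRank_limitRank (hN : IsPseudoRankFunction N)
    (hS : ∀ k, IsFrobeniusRank (S k)) : IsFrobeniusRank (limitRank S hN) :=
  .ultraLimit fun k => (hS k).comp (map (AlgHom.id K D) (term hN A k)).toRingHom

lemma limitRank_one_tmul (hN : IsPseudoRankFunction N) (hSN : ∀ k a, S k (1 ⊗ₜ a) = N a)
    (c : approximations hN A) : limitRank S hN (1 ⊗ₜ c) = N (limit hN A c) := by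
  refine ultraLimit_eq_of_tendsto ?_
  have h : Tendsto (fun k => N (term hN A k c)) atTop (𝓝 (N (limit hN A c))) :=
    RankTendsto.tendsto_map hN c.2
  simpa [hSN] using h

end approximations

theorem exists_isPseudoRankFunction_tensor (hN : IsPseudoRankFunction N) (hA : Monotone A)
    (hdense : RankDense N (⋃ k, (A k : Set M))) {S : ∀ k, D ⊗[K] A k → ℝ}
    (hS : ∀ k, IsFrobeniusRank (S k)) (hSN : ∀ k a, S k (1 ⊗ₜ a) = N a) :
    ∃ S : D ⊗[K] M → ℝ, IsPseudoRankFunction S := by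
  have hsurj := approximations.limit_surjective hN hA hdense
  have hrank := approximations.isFrobeniusRank_limitRank hN hS
  have hker (c) (hc : approximations.limit hN A c = 0) :
      approximations.limitRank S hN (1 ⊗ₜ c) = 0 := by
    rw [approximations.limitRank_one_tmul hN hSN, hc, hN.map_zero]
  obtain ⟨S', hS'⟩ := hrank.exists_isFrobeniusRank_of_surjective
    (map (AlgHom.id K D) (approximations.limit hN A)).toRingHom
    (LinearMap.lTensor_surjective D hsurj)
    fun x hx => hrank.isPseudoRankFunction.eq_zero_of_map_eq_zero hsurj hker hx
  exact ⟨S', hS'.isPseudoRankFunction⟩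

end Existence

/-! ### Uniqueness and density -/

section Approximation

open Algebra.TensorProduct

variable {K D M : Type*} [Field K] [Ring D] [Algebra K D] [Ring M] [Algebra K M]

lemma exists_mem_closure_forall_map_sub_lt {N : M → ℝ} {B : Set M} (hB : RankDense N B)
    (x : D ⊗[K] M) {ε : ℝ} (hε : 0 < ε) :
    ∃ y ∈ Subring.closure {x : D ⊗[K] M | ∃ d : D, ∃ a ∈ B, x = d ⊗ₜ[K] a},
      ∀ S : D ⊗[K] M → ℝ, IsPseudoRankFunction S → (∀ m, S (1 ⊗ₜ m) = N m) → S (x - y) < ε := by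
  induction x generalizing ε with
  | zero => exact ⟨0, zero_mem _, fun S hS _ => by rwa [sub_zero, hS.map_zero]⟩
  | tmul d m =>
    obtain ⟨a, haB, ha⟩ := hB m ε hε
    refine ⟨d ⊗ₜ a, Subring.subset_closure ⟨d, a, haB, rfl⟩, fun S hS hSN => ?_⟩
    calc S (d ⊗ₜ m - d ⊗ₜ a) = S ((d ⊗ₜ[K] (1 : M)) * ((1 : D) ⊗ₜ[K] (m - a))) := by
          rw [← TensorProduct.tmul_sub, tmul_mul_tmul, mul_one, one_mul]
      _ ≤ S (1 ⊗ₜ (m - a)) := hS.mul_le_right _ _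
      _ < ε := by rwa [hSN]
  | add x x' hx hx' =>
    obtain ⟨y, hyB, hy⟩ := hx (half_pos hε)
    obtain ⟨y', hyB', hy'⟩ := hx' (half_pos hε)
    refine ⟨y + y', add_mem hyB hyB', fun S hS hSN => ?_⟩
    rw [add_sub_add_comm]
    linarith [hS.subadditive (x - y) (x' - y'), hy S hS hSN, hy' S hS hSN]

variable {A : ℕ → Subalgebra K M}

variable (D) in
lemma monotone_range_map_val (hA : Monotone A) :
    Monotone fun k => (map (AlgHom.id K D) (A k).val).range := by
  intro k l hkl
  have hcomp : (map (AlgHom.id K D) (A l).val).comp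
      (map (AlgHom.id K D) (Subalgebra.inclusion (hA hkl))) = map (AlgHom.id K D) (A k).val := by
    ext <;> rfl
  beta_reduce
  rw [← hcomp]
  exact AlgHom.range_comp_le_range _ _

lemma exists_mem_range_of_mem_closure (hA : Monotone A) {y : D ⊗[K] M}
    (hy : y ∈ Subring.closure
      {x : D ⊗[K] M | ∃ d : D, ∃ a ∈ ⋃ k, (A k : Set M), x = d ⊗ₜ[K] a}) :
    ∃ k, y ∈ (map (AlgHom.id K D) (A k).val).range := by
  let R : ℕ → Subalgebra K (D ⊗[K] M) := fun k => (map (AlgHom.id K D) (A k).val).range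
  have hle : Subring.closure {x : D ⊗[K] M | ∃ d : D, ∃ a ∈ ⋃ k, (A k : Set M), x = d ⊗ₜ[K] a} ≤
      (⨆ k, R k).toSubring := by
    refine Subring.closure_le.2 ?_
    rintro _ ⟨d, a, ha, rfl⟩
    obtain ⟨k, hk⟩ := Set.mem_iUnion.1 ha
    exact le_iSup R k ⟨d ⊗ₜ ⟨a, hk⟩, rfl⟩
  have hyR : y ∈ ((⨆ k, R k : Subalgebra K (D ⊗[K] M)) : Set (D ⊗[K] M)) := hle hy
  rwa [coe_iSup_subalgebra (monotone_range_map_val D hA), Set.mem_iUnion] at hyR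

end Approximation

section TensorTower

open Filter Algebra.TensorProduct

variable {K D M : Type*} [Field K] [DivisionRing D] [Algebra K D] [Ring M] [Algebra K M]
  {N : M → ℝ} {A : ℕ → Subalgebra K M} {ι : ℕ → Type*} [∀ k, Fintype (ι k)]
  [∀ k, DecidableEq (ι k)] [∀ k, Nonempty (ι k)] {S S' : D ⊗[K] M → ℝ}

lemma IsPseudoRankFunction.eq_of_mem_range_map_val (hS : IsPseudoRankFunction S)
    (hS' : IsPseudoRankFunction S') (φ : ∀ k, A k ≃ₐ[K] Matrix (ι k) (ι k) K) {k : ℕ}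
    {y : D ⊗[K] M} (hy : y ∈ (map (AlgHom.id K D) (A k).val).range) : S y = S' y := by
  obtain ⟨z, rfl⟩ := hy
  exact ((hS.comp (map (AlgHom.id K D) (A k).val).toRingHom).apply_eq_normRank
    (tensorMatrixEquiv D (φ k)).toRingEquiv z).trans
    ((hS'.comp (map (AlgHom.id K D) (A k).val).toRingHom).apply_eq_normRank
      (tensorMatrixEquiv D (φ k)).toRingEquiv z).symm

lemma IsPseudoRankFunction.apply_one_tmul_of_tower (hS : IsPseudoRankFunction S)
    (hN : IsRankFunction N) (hcomplete : RankComplete N) (hA : Monotone A)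
    (φ : ∀ k, A k ≃ₐ[K] Matrix (ι k) (ι k) K) (hdense : RankDense N (⋃ k, (A k : Set M)))
    (hι : Tendsto (fun k => Fintype.card (ι k)) atTop atTop) (m : M) : S (1 ⊗ₜ m) = N m :=
  congrFun ((hS.comp (includeRight : M →ₐ[K] D ⊗[K] M).toRingHom).eq_of_tower
    hN hcomplete hA φ hdense hι) m

theorem IsPseudoRankFunction.eq_of_tensor_tower (hS : IsPseudoRankFunction S)
    (hS' : IsPseudoRankFunction S') (hA : Monotone A)
    (φ : ∀ k, A k ≃ₐ[K] Matrix (ι k) (ι k) K) (hdense : RankDense N (⋃ k, (A k : Set M)))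
    (hSN : ∀ m, S (1 ⊗ₜ m) = N m) (hSN' : ∀ m, S' (1 ⊗ₜ m) = N m) : S' = S := by
  refine hS.eq_of_forall_exists_approx hS' fun x ε hε => ?_
  obtain ⟨y, hyA, hy⟩ := exists_mem_closure_forall_map_sub_lt hdense x hε
  obtain ⟨k, hyk⟩ := exists_mem_range_of_mem_closure hA hyA
  exact ⟨y, hS'.eq_of_mem_range_map_val hS φ hyk, (hy S hS hSN).le, (hy S' hS' hSN').le⟩

variable (D) in
theorem exists_isPseudoRankFunction_tensor_tower (hN : IsPseudoRankFunction N) (hA : Monotone A)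
    (φ : ∀ k, A k ≃ₐ[K] Matrix (ι k) (ι k) K) (hdense : RankDense N (⋃ k, (A k : Set M))) :
    ∃ S : D ⊗[K] M → ℝ, IsPseudoRankFunction S := by
  have hlevel (k) : IsFrobeniusRank (normRank ∘ (tensorMatrixEquiv D (φ k)).toRingEquiv) :=
    isFrobeniusRank_normRank.comp (tensorMatrixEquiv D (φ k)).toRingEquiv.toRingHom
  exact exists_isPseudoRankFunction_tensor hN hA hdense hlevel fun k a =>
    (hlevel k).isPseudoRankFunction.apply_one_tmul (hN.comp (A k).val.toRingHom) (φ k) a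

end TensorTower

lemma nonempty_of_equiv_matrix {R F ι : Type*} [Nontrivial R] (φ : R ≃ Matrix ι ι F) :
    Nonempty ι := by
  by_contra hempty
  rw [not_nonempty_iff] at hempty
  exact not_subsingleton R φ.subsingleton

lemma isCentral_of_range_algebraMap_eq_center {K D : Type*} [CommRing K] [Ring D] [Algebra K D]
    (hcenter : Set.range (algebraMap K D) = (Subring.center D : Set D)) : Algebra.IsCentral K D :=
  ⟨fun _ hd => hcenter.ge hd⟩

theorem statement5_general {D K M : Type*} [DivisionRing D] [Field K] [Algebra K D]
    [Algebra.IsCentral K D] [Ring M] [Algebra K M] {N : M → ℝ} (hN : IsRankFunction N)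
    (hcomplete : RankComplete N) {A : ℕ → Subalgebra K M} (hA : Monotone A) {p : ℕ → ℕ}
    (hp : Filter.Tendsto p Filter.atTop Filter.atTop)
    (φ : ∀ n, A n ≃ₐ[K] Matrix (Fin (p n)) (Fin (p n)) K)
    (hdense : RankDense N (⋃ n, (A n : Set M))) :
    IsSimpleRing (D ⊗[K] M) ∧
      (∃! S : D ⊗[K] M → ℝ, IsRankFunction S) ∧
      ∀ S : D ⊗[K] M → ℝ, IsRankFunction S →
        RankDense S (Subring.closure
          {x : D ⊗[K] M | ∃ d : D, ∃ a ∈ ⋃ n, (A n : Set M), x = d ⊗ₜ[K] a} : Set (D ⊗[K] M)) := by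
  have := hN.1.nontrivial
  have (n : ℕ) : Nonempty (Fin (p n)) := nonempty_of_equiv_matrix (φ n).toEquiv
  have hcard : Filter.Tendsto (fun n => Fintype.card (Fin (p n))) .atTop .atTop := by
    simpa only [Fintype.card_fin] using hp
  have hM : IsSimpleRing M := isSimpleRing_of_tower hN hcomplete hA φ hdense hcard
  have hDM : IsSimpleRing (D ⊗[K] M) := isSimpleRing_tensorProduct
  have hSN {S : D ⊗[K] M → ℝ} (hS : IsPseudoRankFunction S) : ∀ m, S (1 ⊗ₜ m) = N m :=
    hS.apply_one_tmul_of_tower hN hcomplete hA φ hdense hcard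
  refine ⟨hDM, ?_, fun S hS x ε hε => ?_⟩
  · obtain ⟨S, hS⟩ := exists_isPseudoRankFunction_tensor_tower D hN.1 hA φ hdense
    exact ⟨S, hS.isRankFunction, fun S' hS' =>
      hS.eq_of_tensor_tower hS'.1 hA φ hdense (hSN hS) (hSN hS'.1)⟩
  · obtain ⟨y, hyA, hy⟩ := exists_mem_closure_forall_map_sub_lt hdense x hε
    exact ⟨y, hyA, hy S hS.1 (hSN hS.1)⟩

/-- **Lemma 3.1** (Ara–Claramunt). For a division ring `D` with center `K`, the simple `D`-ring
`D ⊗_K M_K` has exactly one rank function `S`, and the subring `D ⊗_K (lim_n M_{2^n}(K))` is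
dense in `D ⊗_K M_K` with respect to the `S`-metric. -/
theorem statement5 (D : Type) [DivisionRing D] (K : Type) [Field K] [Algebra K D]
    (hcenter : Set.range (algebraMap K D) = (Subring.center D : Set D))
    (M : Type) [Ring M] [Algebra K M] (NM : M → ℝ)
    (hNM : IsRankFunction NM) (hcomplete : RankComplete NM)
    (A : ℕ → Subalgebra K M) (hchain : ∀ n, A n ≤ A (n + 1))
    (hiso : ∀ n, Nonempty ((A n) ≃ₐ[K] Matrix (Fin (2 ^ n)) (Fin (2 ^ n)) K))
    (hdense : RankDense NM (⋃ n, (A n : Set M))) :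
    IsSimpleRing (D ⊗[K] M) ∧
      (∃! S : D ⊗[K] M → ℝ, IsRankFunction S) ∧
      ∀ S : D ⊗[K] M → ℝ, IsRankFunction S →
        RankDense S (Subring.closure
          {x : D ⊗[K] M | ∃ d : D, ∃ a ∈ ⋃ n, (A n : Set M), x = d ⊗ₜ[K] a} : Set (D ⊗[K] M)) := by
  have := isCentral_of_range_algebraMap_eq_center hcenter
  exact statement5_general hNM hcomplete (monotone_nat_of_le_succ hchain)
    (tendsto_pow_atTop_atTop_of_one_lt one_lt_two) (fun n => (hiso n).some) hdense

end AraClaramunt
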